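/- Let n ≥ 2, let p > 0 be a real number, and let f be a continuous nonnegative function on the unit sphere S^{n-1} ⊆ ℝ^n that is not identically zero. Then there exists a constant C > 0, depending only on n, p and f, such that for every nonempty compact convex origin-symmetric set K ⊆ ℝ^n with support function h_K, one has ∫_{S^{n-1}} h_K(x)^p f(x) dσ(x) ≥ C · (sup_{x ∈ S^{n-1}} h_K(x))^p. -/

import Mathlib

open MeasureTheory
open scoped RealInnerProductSpace

/-- The support function of a set `K ⊆ ℝⁿ`: `h_K(x) = sup_{y ∈ K} ⟨y, x⟩`. -/
noncomputable def supportFunction {n : ℕ} (K : Set (EuclideanSpace ℝ (Fin n)))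
    (x : EuclideanSpace ℝ (Fin n)) : ℝ :=
  sSup ((fun y => ⟪y, x⟫) '' K)

/-!
Let `ν` be the measure `f σ`. If `K` is symmetric, then `h_K ≥ |⟨y, ·⟩|` for every `y ∈ K`, so
`∫ h_K ^ p dν` is at least the cosine transform `∫ |⟨y, x⟩| ^ p dν(x)`. This transform is continuous
and `p`-homogeneous in `y`, and it is positive for `y ≠ 0` because `ν` does not live on a great
subsphere. Compactness of the sphere then bounds it below by `c ‖y‖ ^ p` with `c > 0`, while the
supremum of `h_K` over the sphere is at most the supremum of `‖y‖` over `K`.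
-/

open Metric

section SupportFunction

variable {n : ℕ} {K : Set (EuclideanSpace ℝ (Fin n))} {R : ℝ}

lemma inner_le_supportFunction (hK : Bornology.IsBounded K) {y : EuclideanSpace ℝ (Fin n)}
    (hy : y ∈ K) (x : EuclideanSpace ℝ (Fin n)) : ⟪y, x⟫ ≤ supportFunction K x := by
  obtain ⟨R, hR⟩ := hK.exists_norm_le
  refine le_csSup ⟨R * ‖x‖, ?_⟩ (Set.mem_image_of_mem _ hy)
  rintro _ ⟨z, hz, rfl⟩
  exact (real_inner_le_norm z x).trans (by gcongr; exact hR z hz)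

lemma abs_inner_le_supportFunction (hK : Bornology.IsBounded K) (hsymm : K = -K)
    {y : EuclideanSpace ℝ (Fin n)} (hy : y ∈ K) (x : EuclideanSpace ℝ (Fin n)) :
    |⟪y, x⟫| ≤ supportFunction K x := by
  have hy_neg : -y ∈ K := by rwa [hsymm, Set.neg_mem_neg]
  refine abs_le'.2 ⟨inner_le_supportFunction hK hy x, ?_⟩
  simpa only [inner_neg_left] using inner_le_supportFunction hK hy_neg x

lemma supportFunction_nonneg (hne : K.Nonempty) (hK : Bornology.IsBounded K) (hsymm : K = -K)
    (x : EuclideanSpace ℝ (Fin n)) : 0 ≤ supportFunction K x :=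
  (abs_nonneg _).trans (abs_inner_le_supportFunction hK hsymm hne.some_mem x)

lemma supportFunction_le_mul_norm (hne : K.Nonempty) (hR : ∀ y ∈ K, ‖y‖ ≤ R)
    (x : EuclideanSpace ℝ (Fin n)) : supportFunction K x ≤ R * ‖x‖ := by
  refine csSup_le (hne.image _) ?_
  rintro _ ⟨y, hy, rfl⟩
  exact (real_inner_le_norm y x).trans (by gcongr; exact hR y hy)

lemma supportFunction_add_le (hne : K.Nonempty) (hK : Bornology.IsBounded K)
    (x y : EuclideanSpace ℝ (Fin n)) :
    supportFunction K (x + y) ≤ supportFunction K x + supportFunction K y := by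
  refine csSup_le (hne.image _) ?_
  rintro _ ⟨z, hz, rfl⟩
  simpa only [inner_add_right] using
    add_le_add (inner_le_supportFunction hK hz x) (inner_le_supportFunction hK hz y)

lemma continuous_supportFunction (hne : K.Nonempty) (hK : Bornology.IsBounded K) :
    Continuous (supportFunction K) := by
  obtain ⟨R, hR⟩ := hK.exists_norm_le
  refine (LipschitzWith.of_le_add_mul' R fun x y => ?_).continuous
  calc supportFunction K x
      = supportFunction K (y + (x - y)) := by rw [add_sub_cancel]
    _ ≤ supportFunction K y + supportFunction K (x - y) := supportFunction_add_le hne hK _ _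
    _ ≤ supportFunction K y + R * dist x y := by
        rw [dist_eq_norm]
        gcongr
        exact supportFunction_le_mul_norm hne hR _

lemma iSup_sphere_supportFunction_le (hne : K.Nonempty) (hR : ∀ y ∈ K, ‖y‖ ≤ R) :
    ⨆ x : sphere (0 : EuclideanSpace ℝ (Fin n)) 1, supportFunction K x ≤ R := by
  have hR_nonneg : 0 ≤ R := (norm_nonneg _).trans (hR _ hne.some_mem)
  refine Real.iSup_le (fun x => ?_) hR_nonneg
  simpa only [norm_eq_of_mem_sphere, mul_one] using supportFunction_le_mul_norm hne hR x

lemma iSup_sphere_supportFunction_rpow_le {p : ℝ} (hp : 0 < p) (hne : K.Nonempty)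
    (hK : Bornology.IsBounded K) (hsymm : K = -K) (hR : ∀ y ∈ K, ‖y‖ ^ p ≤ R) :
    (⨆ x : sphere (0 : EuclideanSpace ℝ (Fin n)) 1, supportFunction K x) ^ p ≤ R := by
  have hR_nonneg : 0 ≤ R := (Real.rpow_nonneg (norm_nonneg _) p).trans (hR _ hne.some_mem)
  have h_iSup_nonneg : 0 ≤ ⨆ x : sphere (0 : EuclideanSpace ℝ (Fin n)) 1, supportFunction K x :=
    Real.iSup_nonneg fun x => supportFunction_nonneg hne hK hsymm x
  rw [← Real.le_rpow_inv_iff_of_pos h_iSup_nonneg hR_nonneg hp]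
  refine iSup_sphere_supportFunction_le hne fun y hy => ?_
  exact (Real.le_rpow_inv_iff_of_pos (norm_nonneg y) hR_nonneg hp).2 (hR y hy)

end SupportFunction

section CosineTransform

variable {E : Type*} [NormedAddCommGroup E] [InnerProductSpace ℝ E] [MeasurableSpace E]
  {p : ℝ} {ν : Measure (sphere (0 : E) 1)}

/-- The `L^p` cosine transform `u ↦ ∫ |⟨u, x⟩| ^ p dν(x)` of a measure `ν` on the unit sphere. It is
defined for all `u`, not only unit vectors, so that it can be evaluated at the points of a convex
body. -/
noncomputable def cosineTransform (p : ℝ) (ν : Measure (sphere (0 : E) 1)) (u : E) : ℝ :=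
  ∫ x, |⟪u, (x : E)⟫| ^ p ∂ν

lemma cosineTransform_nonneg (p : ℝ) (ν : Measure (sphere (0 : E) 1)) (u : E) :
    0 ≤ cosineTransform p ν u :=
  integral_nonneg fun _ => by positivity

lemma cosineTransform_smul (p : ℝ) (ν : Measure (sphere (0 : E) 1)) (t : ℝ) (u : E) :
    cosineTransform p ν (t • u) = |t| ^ p * cosineTransform p ν u := by
  simp only [cosineTransform, real_inner_smul_left, abs_mul,
    Real.mul_rpow (abs_nonneg _) (abs_nonneg _), integral_const_mul]

variable [FiniteDimensional ℝ E] [BorelSpace E] [IsFiniteMeasure ν]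

lemma integrable_abs_inner_rpow (hp : 0 ≤ p) (u : E) :
    Integrable (fun x : sphere (0 : E) 1 => |⟪u, (x : E)⟫| ^ p) ν :=
  Continuous.integrable_of_hasCompactSupport
    (Continuous.rpow_const (by fun_prop) fun _ => Or.inr hp) (.of_compactSpace _)

lemma continuous_cosineTransform (hp : 0 ≤ p) : Continuous (cosineTransform p ν) := by
  have hcont : Continuous fun q : E × sphere (0 : E) 1 => |⟪q.1, (q.2 : E)⟫| ^ p :=
    Continuous.rpow_const (by fun_prop) fun _ => Or.inr hp
  simpa only [Measure.restrict_univ] using!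
    continuous_parametric_integral_of_continuous (μ := ν) hcont isCompact_univ

lemma cosineTransform_pos (hp : 0 ≤ p) {u : E}
    (hu : ¬ ∀ᵐ x : sphere (0 : E) 1 ∂ν, ⟪u, (x : E)⟫ = 0) :
    0 < cosineTransform p ν u := by
  have h_nonneg : 0 ≤ fun x : sphere (0 : E) 1 => |⟪u, (x : E)⟫| ^ p := fun _ => by positivity
  refine (cosineTransform_nonneg p ν u).lt_of_ne' fun h_zero => hu ?_
  filter_upwards [(integral_eq_zero_iff_of_nonneg h_nonneg
    (integrable_abs_inner_rpow hp u)).1 h_zero] with x hx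
  exact abs_eq_zero.1 ((Real.rpow_eq_zero_iff_of_nonneg (abs_nonneg _)).1 hx).1

lemma exists_pos_mul_norm_rpow_le_cosineTransform (hp : 0 < p)
    (hν : ∀ u : E, u ≠ 0 → ¬ ∀ᵐ x : sphere (0 : E) 1 ∂ν, ⟪u, (x : E)⟫ = 0) :
    ∃ c > 0, ∀ y : E, c * ‖y‖ ^ p ≤ cosineTransform p ν y := by
  obtain ⟨c, hc, hc_le⟩ := (isCompact_sphere (0 : E) 1).exists_forall_le'
    (continuous_cosineTransform (ν := ν) hp.le).continuousOn (a := 0) fun u hu =>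
      cosineTransform_pos hp.le (hν u (ne_zero_of_mem_unit_sphere ⟨u, hu⟩))
  refine ⟨c, hc, fun y => ?_⟩
  obtain rfl | hy := eq_or_ne y 0
  · simpa [Real.zero_rpow hp.ne'] using cosineTransform_nonneg p ν 0
  have hu : ‖y‖⁻¹ • y ∈ sphere (0 : E) 1 := by simp [norm_smul, hy]
  calc c * ‖y‖ ^ p
      ≤ cosineTransform p ν (‖y‖⁻¹ • y) * ‖y‖ ^ p := by gcongr; exact hc_le _ hu
    _ = cosineTransform p ν (‖y‖ • ‖y‖⁻¹ • y) := by
        rw [cosineTransform_smul p ν ‖y‖, abs_norm, mul_comm]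
    _ = cosineTransform p ν y := by rw [smul_inv_smul₀ (norm_ne_zero_iff.2 hy)]

end CosineTransform

section Sphere

open scoped Pointwise

variable {E : Type*} [NormedAddCommGroup E] [InnerProductSpace ℝ E] [FiniteDimensional ℝ E]
  [MeasurableSpace E] [BorelSpace E] (μ : Measure E) [μ.IsAddHaarMeasure]

lemma ae_toSphere_inner_ne_zero {u : E} (hu : u ≠ 0) :
    ∀ᵐ x : sphere (0 : E) 1 ∂μ.toSphere, ⟪u, (x : E)⟫ ≠ 0 := by
  have h_meas : MeasurableSet {x : sphere (0 : E) 1 | ⟪u, (x : E)⟫ = 0} :=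
    (isClosed_eq (by fun_prop) continuous_const).measurableSet
  have h_cone : Set.Ioo (0 : ℝ) 1 • ((↑) '' {x : sphere (0 : E) 1 | ⟪u, (x : E)⟫ = 0}) ⊆
      ((ℝ ∙ u)ᗮ : Set E) := by
    rintro _ ⟨t, -, _, ⟨x, hx, rfl⟩, rfl⟩
    exact (ℝ ∙ u)ᗮ.smul_mem t (Submodule.mem_orthogonal_singleton_iff_inner_right.2 hx)
  have h_proper : (ℝ ∙ u)ᗮ ≠ ⊤ := by
    simpa [Submodule.orthogonal_eq_top_iff] using hu
  have h_null : μ.toSphere {x : sphere (0 : E) 1 | ⟪u, (x : E)⟫ = 0} = 0 := by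
    rw [Measure.toSphere_apply' _ h_meas,
      measure_mono_null h_cone (Measure.addHaar_submodule μ _ h_proper), mul_zero]
  simpa [ae_iff] using h_null

variable {μ} in
lemma not_ae_withDensity_toSphere_inner_eq_zero {f : sphere (0 : E) 1 → ℝ}
    (hf : AEMeasurable f μ.toSphere) (hf_nonneg : 0 ≤ᵐ[μ.toSphere] f)
    (hf_ne : ¬ f =ᵐ[μ.toSphere] 0) {u : E} (hu : u ≠ 0) :
    ¬ ∀ᵐ x : sphere (0 : E) 1 ∂μ.toSphere.withDensity fun x => ENNReal.ofReal (f x),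
      ⟪u, (x : E)⟫ = 0 := by
  intro h_zero
  have h_ne := (withDensity_absolutelyContinuous μ.toSphere fun x => ENNReal.ofReal (f x)).ae_le
    (ae_toSphere_inner_ne_zero μ hu)
  have h_false : ∀ᵐ _ ∂μ.toSphere.withDensity fun x => ENNReal.ofReal (f x), False := by
    filter_upwards [h_zero, h_ne] with x hx hx' using hx' hx
  have h_density : (fun x => ENNReal.ofReal (f x)) =ᵐ[μ.toSphere] 0 :=
    (withDensity_eq_zero_iff hf.ennreal_ofReal).1 (by simpa using h_false)
  refine hf_ne ?_
  filter_upwards [h_density, hf_nonneg] with x hx hx_nonneg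
  exact (ENNReal.ofReal_eq_zero.1 hx).antisymm hx_nonneg

end Sphere

section LowerBound

variable {n : ℕ} {p : ℝ}

lemma cosineTransform_le_integral_supportFunction_rpow
    {ν : Measure (sphere (0 : EuclideanSpace ℝ (Fin n)) 1)} [IsFiniteMeasure ν] (hp : 0 ≤ p)
    {K : Set (EuclideanSpace ℝ (Fin n))} (hK : Bornology.IsBounded K) (hsymm : K = -K)
    {y : EuclideanSpace ℝ (Fin n)} (hy : y ∈ K) :
    cosineTransform p ν y ≤ ∫ x, supportFunction K x ^ p ∂ν := by
  have h_cont := (continuous_supportFunction ⟨y, hy⟩ hK).comp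
    (continuous_subtype_val (p := (· ∈ sphere (0 : EuclideanSpace ℝ (Fin n)) 1)))
  have h_int := (h_cont.rpow_const fun _ => Or.inr hp).integrable_of_hasCompactSupport (μ := ν)
    (.of_compactSpace _)
  refine integral_mono (integrable_abs_inner_rpow hp y) h_int fun x => ?_
  exact Real.rpow_le_rpow (abs_nonneg _) (abs_inner_le_supportFunction hK hsymm hy x) hp

lemma exists_pos_mul_iSup_supportFunction_rpow_le_integral
    {ν : Measure (sphere (0 : EuclideanSpace ℝ (Fin n)) 1)} [IsFiniteMeasure ν] (hp : 0 < p)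
    (hν : ∀ u : EuclideanSpace ℝ (Fin n), u ≠ 0 →
      ¬ ∀ᵐ x : sphere (0 : EuclideanSpace ℝ (Fin n)) 1 ∂ν,
        ⟪u, (x : EuclideanSpace ℝ (Fin n))⟫ = 0) :
    ∃ C > 0, ∀ K : Set (EuclideanSpace ℝ (Fin n)),
      K.Nonempty → Bornology.IsBounded K → K = -K →
      C * (⨆ x : sphere (0 : EuclideanSpace ℝ (Fin n)) 1, supportFunction K x) ^ p ≤
        ∫ x, supportFunction K x ^ p ∂ν := by
  obtain ⟨c, hc, hc_le⟩ := exists_pos_mul_norm_rpow_le_cosineTransform hp hν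
  refine ⟨c, hc, fun K hne hK hsymm => ?_⟩
  rw [← le_div_iff₀' hc]
  refine iSup_sphere_supportFunction_rpow_le hp hne hK hsymm fun y hy => ?_
  rw [le_div_iff₀' hc]
  exact (hc_le y).trans (cosineTransform_le_integral_supportFunction_rpow hp.le hK hsymm hy)

theorem integral_supportFunction_rpow_ge_general (hp : 0 < p)
    {f : sphere (0 : EuclideanSpace ℝ (Fin n)) 1 → ℝ}
    (hf : Integrable f (volume : Measure (EuclideanSpace ℝ (Fin n))).toSphere)
    (hf_nonneg : 0 ≤ᵐ[(volume : Measure (EuclideanSpace ℝ (Fin n))).toSphere] f)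
    (hf_ne : ¬ f =ᵐ[(volume : Measure (EuclideanSpace ℝ (Fin n))).toSphere] 0) :
    ∃ C > 0, ∀ K : Set (EuclideanSpace ℝ (Fin n)),
      K.Nonempty → Bornology.IsBounded K → K = -K →
      (∫ x : sphere (0 : EuclideanSpace ℝ (Fin n)) 1, supportFunction K x ^ p * f x
          ∂(volume : Measure (EuclideanSpace ℝ (Fin n))).toSphere) ≥
        C * (⨆ x : sphere (0 : EuclideanSpace ℝ (Fin n)) 1, supportFunction K x) ^ p := by
  have := isFiniteMeasure_withDensity_ofReal hf.2
  obtain ⟨C, hC, hC_le⟩ := exists_pos_mul_iSup_supportFunction_rpow_le_integral hp fun u hu =>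
    not_ae_withDensity_toSphere_inner_eq_zero hf.aemeasurable hf_nonneg hf_ne hu
  refine ⟨C, hC, fun K hne hK hsymm => (hC_le K hne hK hsymm).trans_eq ?_⟩
  rw [integral_withDensity_eq_integral_toReal_smul₀ hf.aemeasurable.ennreal_ofReal
    (.of_forall fun _ => ENNReal.ofReal_lt_top)]
  refine integral_congr_ae ?_
  filter_upwards [hf_nonneg] with x hx
  rw [ENNReal.toReal_ofReal hx, smul_eq_mul, mul_comm]

end LowerBound

/-- For `n ≥ 2`, `p > 0` and a continuous nonnegative function `f` on the
unit sphere that is not identically zero, there is `C > 0` (depending only on `n`, `p`, `f`)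
such that for every nonempty compact convex origin-symmetric `K ⊆ ℝⁿ`,
`∫_{S^{n-1}} h_K(x)^p f(x) dσ(x) ≥ C (sup_{S^{n-1}} h_K)^p`. -/
theorem integral_supportFunction_rpow_ge (n : ℕ) (hn : 2 ≤ n) (p : ℝ) (hp : 0 < p)
    (f : Metric.sphere (0 : EuclideanSpace ℝ (Fin n)) 1 → ℝ)
    (hf : Continuous f) (hf0 : ∀ x, 0 ≤ f x) (hfne : ∃ x, f x ≠ 0) :
    ∃ C > (0 : ℝ), ∀ K : Set (EuclideanSpace ℝ (Fin n)),
      K.Nonempty → IsCompact K → Convex ℝ K → K = -K →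
      (∫ x : Metric.sphere (0 : EuclideanSpace ℝ (Fin n)) 1,
          supportFunction K (x : EuclideanSpace ℝ (Fin n)) ^ p * f x
          ∂((volume : Measure (EuclideanSpace ℝ (Fin n))).toSphere)) ≥
        C * (⨆ x : Metric.sphere (0 : EuclideanSpace ℝ (Fin n)) 1,
              supportFunction K (x : EuclideanSpace ℝ (Fin n))) ^ p := by
  obtain ⟨C, hC, hC_le⟩ := integral_supportFunction_rpow_ge_general hp
    (hf.integrable_of_hasCompactSupport (.of_compactSpace f)) (.of_forall hf0) fun h =>
      hfne.elim fun x hx => hx (congrFun (Measure.eq_of_ae_eq h hf continuous_zero) x)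
  exact ⟨C, hC, fun K hne hK _ hsymm => hC_le K hne hK.isBounded hsymm⟩
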